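/- Let n ≥ 1 and let ψ̃ : X(ℝⁿ) × X_c(ℝⁿ) → ℝ be an ℝ-bilinear map satisfying the 1-cocycle identity ψ̃([v,w],u) = ψ̃(v,[w,u]) − ψ̃(w,[v,u]) for all v, w ∈ X(ℝⁿ) and all u ∈ X_c(ℝⁿ). Let k ≥ 0 be an integer and suppose that ψ̃(w,u) = 0 for every u ∈ X_c(ℝⁿ) and every vector field w all of whose component functions are polynomials of degree at most k. Then for every vector field v all of whose component functions are homogeneous polynomials of degree k+1, and every u ∈ X_c(ℝⁿ), one has (n+1−k)·ψ̃(v,u) = −ψ̃(E,[v,u]), where E is the Euler vector field E(x) = x. -/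

import Mathlib

/-!
The Euler field grades homogeneous fields: `[E, v] = k v` for `v` homogeneous of degree `k + 1`
(`lieBracket_euler`). The cocycle identity for `(E, v)` therefore reads
`k ψ(v, u) = ψ(E, [v, u]) - ψ(v, [E, u])`, and it remains to see that
`ψ(v, [E, u]) = -(n + 1) ψ(v, u)`.

The functional `ψ(v, ·)` is translation invariant: for a constant field `∂ᵢ`, both `∂ᵢ` and
`[∂ᵢ, v]` are polynomial of degree at most `k`, so the cocycle identity for `(∂ᵢ, v)` gives
`ψ(v, [∂ᵢ, u]) = 0` for every compactly supported `u`. By the Leibniz rule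
`∑ᵢ [∂ᵢ, xᵢ u] = [E, u] + (n + 1) u` (`sum_lieBracket_const`), and applying `ψ(v, ·)` to this
identity finishes the proof.
-/

noncomputable section

/-- A compactly supported smooth vector field on `ℝⁿ`. -/
def IsCompactlySupportedVF {n : ℕ}
    (u : EuclideanSpace ℝ (Fin n) → EuclideanSpace ℝ (Fin n)) : Prop :=
  ContDiff ℝ (⊤ : ℕ∞) u ∧ HasCompactSupport u

/-- A vector field on `ℝⁿ` all of whose component functions are polynomials of total degree
at most `k`. -/
def IsPolyVFDegLE {n : ℕ} (w : EuclideanSpace ℝ (Fin n) → EuclideanSpace ℝ (Fin n))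
    (k : ℕ) : Prop :=
  ∃ p : Fin n → MvPolynomial (Fin n) ℝ, (∀ i, (p i).totalDegree ≤ k) ∧
    ∀ x i, w x i = MvPolynomial.eval (fun j ↦ x j) (p i)

/-- A vector field on `ℝⁿ` all of whose component functions are homogeneous polynomials of
degree `d`. -/
def IsHomogPolyVF {n : ℕ} (v : EuclideanSpace ℝ (Fin n) → EuclideanSpace ℝ (Fin n))
    (d : ℕ) : Prop :=
  ∃ p : Fin n → MvPolynomial (Fin n) ℝ, (∀ i, (p i).IsHomogeneous d) ∧
    ∀ x i, v x i = MvPolynomial.eval (fun j ↦ x j) (p i)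

/-- The total derivative of a polynomial function, in terms of formal partial derivatives. -/
lemma hasFDerivAt_eval {n : ℕ} (p : MvPolynomial (Fin n) ℝ) (x : EuclideanSpace ℝ (Fin n)) :
    HasFDerivAt (fun y : EuclideanSpace ℝ (Fin n) ↦ MvPolynomial.eval (fun j ↦ y j) p)
      (∑ j, MvPolynomial.eval (fun j ↦ x j) (MvPolynomial.pderiv j p) •
        (EuclideanSpace.proj j : EuclideanSpace ℝ (Fin n) →L[ℝ] ℝ)) x := by
  induction p using MvPolynomial.induction_on with
  | C a => simpa using hasFDerivAt_const a x
  | add p q hp hq =>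
    simp only [map_add, add_smul, Finset.sum_add_distrib]
    exact hp.add hq
  | mul_X p i hp =>
    have hi : HasFDerivAt (fun y : EuclideanSpace ℝ (Fin n) ↦ y i)
        (EuclideanSpace.proj i : EuclideanSpace ℝ (Fin n) →L[ℝ] ℝ) x :=
      (EuclideanSpace.proj i : EuclideanSpace ℝ (Fin n) →L[ℝ] ℝ).hasFDerivAt
    have h := hp.mul hi
    simp only [map_mul, MvPolynomial.eval_X]
    refine h.congr_fderiv ?_
    ext y
    simp only [_root_.add_apply, _root_.smul_apply,
      _root_.sum_apply, smul_eq_mul, Derivation.leibniz, MvPolynomial.pderiv_X,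
      map_add, map_mul, MvPolynomial.eval_X, add_mul, Finset.sum_add_distrib, Pi.single_apply,
      Finset.mul_sum]
    congr 1
    · simp [Finset.sum_ite_eq, apply_ite]
    · exact Finset.sum_congr rfl fun j _ ↦ by ring

lemma fderiv_coord_apply {n : ℕ} {v : EuclideanSpace ℝ (Fin n) → EuclideanSpace ℝ (Fin n)}
    {p : Fin n → MvPolynomial (Fin n) ℝ}
    (hp : ∀ x i, v x i = MvPolynomial.eval (fun j ↦ x j) (p i)) (hv : ContDiff ℝ (⊤ : ℕ∞) v)
    (x y : EuclideanSpace ℝ (Fin n)) (i : Fin n) :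
    fderiv ℝ v x y i =
      ∑ j, MvPolynomial.eval (fun j ↦ x j) (MvPolynomial.pderiv j (p i)) * y j := by
  have h1 : HasFDerivAt v (fderiv ℝ v x) x := (hv.differentiable (by simp) x).hasFDerivAt
  have h2 := (EuclideanSpace.proj i : EuclideanSpace ℝ (Fin n) →L[ℝ] ℝ).hasFDerivAt.comp x h1
  have h3 := hasFDerivAt_eval (p i) x
  have h4 : ((EuclideanSpace.proj i : EuclideanSpace ℝ (Fin n) →L[ℝ] ℝ) ∘ v) =
      fun y ↦ MvPolynomial.eval (fun j ↦ y j) (p i) := funext fun z ↦ hp z i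
  rw [h4] at h2
  simpa using DFunLike.congr_fun (h2.unique h3) y

lemma IsHomogPolyVF.contDiff {n d : ℕ}
    {v : EuclideanSpace ℝ (Fin n) → EuclideanSpace ℝ (Fin n)} (hv : IsHomogPolyVF v d) :
    ContDiff ℝ (⊤ : ℕ∞) v := by
  obtain ⟨p, -, hp⟩ := hv
  refine contDiff_euclidean.2 fun i ↦ ?_
  simp only [hp]
  generalize p i = q
  induction q using MvPolynomial.induction_on with
  | C a => simpa using contDiff_const
  | add p q hp hq => simpa using hp.add hq
  | mul_X p i hp =>
    simpa using hp.mul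
      (EuclideanSpace.proj i : EuclideanSpace ℝ (Fin n) →L[ℝ] ℝ).contDiff

/-- The Euler field acts on homogeneous fields of degree `k + 1` with eigenvalue `k`. -/
lemma lieBracket_euler {n k : ℕ}
    {v : EuclideanSpace ℝ (Fin n) → EuclideanSpace ℝ (Fin n)} (hv : IsHomogPolyVF v (k + 1)) :
    VectorField.lieBracket ℝ (fun x ↦ x) v = (k : ℝ) • v := by
  have hs := hv.contDiff
  obtain ⟨p, hh, hp⟩ := hv
  funext x
  ext i
  have h := congrArg (MvPolynomial.eval (fun j ↦ x j)) (hh i).sum_X_mul_pderiv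
  simp only [map_sum, map_mul, MvPolynomial.eval_X, nsmul_eq_mul, map_natCast] at h
  simp only [VectorField.lieBracket, PiLp.sub_apply, fderiv_coord_apply hp hs, fderiv_fun_id,
    ContinuousLinearMap.id_apply, Pi.smul_apply, PiLp.smul_apply, smul_eq_mul, hp]
  simp only [mul_comm (x _)] at h
  rw [h]
  push_cast
  ring

lemma lieBracket_const_left {n : ℕ} (e : EuclideanSpace ℝ (Fin n))
    (v : EuclideanSpace ℝ (Fin n) → EuclideanSpace ℝ (Fin n)) :
    VectorField.lieBracket ℝ (fun _ ↦ e) v = fun x ↦ fderiv ℝ v x e := by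
  funext x
  simp [VectorField.lieBracket]

/-- Differentiating in a constant direction lowers the degree of a homogeneous field. -/
lemma isPolyVFDegLE_lieBracket_const {n k : ℕ} (i : Fin n)
    {v : EuclideanSpace ℝ (Fin n) → EuclideanSpace ℝ (Fin n)} (hv : IsHomogPolyVF v (k + 1)) :
    IsPolyVFDegLE
      (VectorField.lieBracket ℝ (fun _ ↦ EuclideanSpace.single i (1 : ℝ)) v) k := by
  have hs := hv.contDiff
  obtain ⟨p, hh, hp⟩ := hv
  refine ⟨fun j ↦ MvPolynomial.pderiv i (p j), fun j ↦ (hh j).pderiv.totalDegree_le, ?_⟩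
  intro x j
  simp [lieBracket_const_left, fderiv_coord_apply hp hs]

lemma isPolyVFDegLE_const {n : ℕ} (k : ℕ) (e : EuclideanSpace ℝ (Fin n)) :
    IsPolyVFDegLE (fun _ : EuclideanSpace ℝ (Fin n) ↦ e) k :=
  ⟨fun i ↦ MvPolynomial.C (e i), fun i ↦ by simp, fun x i ↦ by simp⟩

namespace IsCompactlySupportedVF

variable {n : ℕ} {u u' : EuclideanSpace ℝ (Fin n) → EuclideanSpace ℝ (Fin n)}

lemma add (hu : IsCompactlySupportedVF u) (hu' : IsCompactlySupportedVF u') :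
    IsCompactlySupportedVF (u + u') :=
  ⟨hu.1.add hu'.1, hu.2.add hu'.2⟩

lemma smul (hu : IsCompactlySupportedVF u) (c : ℝ) : IsCompactlySupportedVF (c • u) :=
  ⟨hu.1.const_smul c, HasCompactSupport.smul_left (f := fun _ ↦ c) hu.2⟩

lemma zero : IsCompactlySupportedVF
    (0 : EuclideanSpace ℝ (Fin n) → EuclideanSpace ℝ (Fin n)) :=
  ⟨contDiff_const, HasCompactSupport.zero⟩

lemma sum {ι : Type*} {s : Finset ι}
    {f : ι → EuclideanSpace ℝ (Fin n) → EuclideanSpace ℝ (Fin n)}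
    (hf : ∀ i, IsCompactlySupportedVF (f i)) : IsCompactlySupportedVF (∑ i ∈ s, f i) := by
  classical
  induction s using Finset.induction_on with
  | empty => simpa using zero
  | insert a s ha ih => simpa [Finset.sum_insert ha] using (hf a).add ih

lemma coord_smul (hu : IsCompactlySupportedVF u) (i : Fin n) :
    IsCompactlySupportedVF (fun x ↦ x i • u x) :=
  ⟨(EuclideanSpace.proj i : EuclideanSpace ℝ (Fin n) →L[ℝ] ℝ).contDiff.smul hu.1,
    HasCompactSupport.smul_left (f := fun x : EuclideanSpace ℝ (Fin n) ↦ x i) hu.2⟩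

lemma lieBracket (hu : IsCompactlySupportedVF u)
    {v : EuclideanSpace ℝ (Fin n) → EuclideanSpace ℝ (Fin n)} (hv : ContDiff ℝ (⊤ : ℕ∞) v) :
    IsCompactlySupportedVF (VectorField.lieBracket ℝ v u) := by
  refine ⟨((hu.1.fderiv_right (by simp)).clm_apply hv).sub
    ((hv.fderiv_right (by simp)).clm_apply hu.1), hu.2.mono' ?_⟩
  -- Off `tsupport u` both `u` and its derivative vanish.
  intro x hx
  by_contra h
  have h1 : fderiv ℝ u x = 0 := by
    by_contra h'
    exact h (support_fderiv_subset ℝ h')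
  exact hx (by simp [VectorField.lieBracket, h1, image_eq_zero_of_notMem_tsupport h])

end IsCompactlySupportedVF

/-- The identity `∑ᵢ [∂ᵢ, xᵢ u] = [E, u] + (n + 1) u`, solved for `[E, u]`. -/
lemma sum_lieBracket_const {n : ℕ}
    {u : EuclideanSpace ℝ (Fin n) → EuclideanSpace ℝ (Fin n)} (hu : ContDiff ℝ (⊤ : ℕ∞) u) :
    VectorField.lieBracket ℝ (fun x ↦ x) u =
      (∑ i : Fin n, VectorField.lieBracket ℝ
        (fun _ ↦ EuclideanSpace.single i (1 : ℝ)) (fun x ↦ x i • u x)) +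
      (-((n : ℝ) + 1)) • u := by
  funext x
  have hux : HasFDerivAt u (fderiv ℝ u x) x := (hu.differentiable (by simp) x).hasFDerivAt
  have hterm (i : Fin n) : VectorField.lieBracket ℝ
      (fun _ ↦ EuclideanSpace.single i (1 : ℝ)) (fun x ↦ x i • u x) x =
      fderiv ℝ u x (x i • EuclideanSpace.single i (1 : ℝ)) + u x := by
    have h := ((EuclideanSpace.proj i : EuclideanSpace ℝ (Fin n) →L[ℝ] ℝ).hasFDerivAt
      (x := x)).smul hux
    rw [lieBracket_const_left]
    change fderiv ℝ ((fun x ↦ (EuclideanSpace.proj i : EuclideanSpace ℝ (Fin n) →L[ℝ] ℝ) x) • u)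
      x _ = _
    erw [h.fderiv]
    simp
  have hx : ∑ i : Fin n, x i • EuclideanSpace.single i (1 : ℝ) = x := by
    simpa using (EuclideanSpace.basisFun (Fin n) ℝ).sum_repr x
  simp only [Pi.add_apply, Finset.sum_apply, hterm, Finset.sum_add_distrib, ← map_sum, hx]
  simp only [VectorField.lieBracket, fderiv_fun_id, ContinuousLinearMap.id_apply, Finset.sum_const,
    Finset.card_univ, Fintype.card_fin, Pi.smul_apply, ← Nat.cast_smul_eq_nsmul ℝ]
  module

/-- If a bilinear `1`-cocycle `ψ̃ : 𝔛(ℝⁿ) × 𝔛_c(ℝⁿ) → ℝ` vanishes on polynomial vector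
fields of degree at most `k`, then for homogeneous `v` of degree `k+1` one has
`(n+1-k)·ψ̃(v,u) = -ψ̃(E,[v,u])` with `E` the Euler vector field. -/
theorem one_cocycle_euler_identity (n : ℕ) (hn : 1 ≤ n)
    (ψ : (EuclideanSpace ℝ (Fin n) → EuclideanSpace ℝ (Fin n)) →
      (EuclideanSpace ℝ (Fin n) → EuclideanSpace ℝ (Fin n)) → ℝ)
    (hadd₁ : ∀ v₁ v₂ u, ContDiff ℝ (⊤ : ℕ∞) v₁ → ContDiff ℝ (⊤ : ℕ∞) v₂ → IsCompactlySupportedVF u →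
      ψ (v₁ + v₂) u = ψ v₁ u + ψ v₂ u)
    (hsmul₁ : ∀ (c : ℝ) v u, ContDiff ℝ (⊤ : ℕ∞) v → IsCompactlySupportedVF u →
      ψ (c • v) u = c * ψ v u)
    (hadd₂ : ∀ v u₁ u₂, ContDiff ℝ (⊤ : ℕ∞) v → IsCompactlySupportedVF u₁ →
      IsCompactlySupportedVF u₂ → ψ v (u₁ + u₂) = ψ v u₁ + ψ v u₂)
    (hsmul₂ : ∀ (c : ℝ) v u, ContDiff ℝ (⊤ : ℕ∞) v → IsCompactlySupportedVF u →
      ψ v (c • u) = c * ψ v u)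
    (hcoc : ∀ v w u, ContDiff ℝ (⊤ : ℕ∞) v → ContDiff ℝ (⊤ : ℕ∞) w → IsCompactlySupportedVF u →
      ψ (VectorField.lieBracket ℝ v w) u =
        ψ v (VectorField.lieBracket ℝ w u) - ψ w (VectorField.lieBracket ℝ v u))
    (k : ℕ)
    (hvanish : ∀ w u, IsPolyVFDegLE w k → IsCompactlySupportedVF u → ψ w u = 0)
    (v : EuclideanSpace ℝ (Fin n) → EuclideanSpace ℝ (Fin n)) (hv : IsHomogPolyVF v (k + 1))
    (u : EuclideanSpace ℝ (Fin n) → EuclideanSpace ℝ (Fin n))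
    (hu : IsCompactlySupportedVF u) :
    ((n : ℝ) + 1 - (k : ℝ)) * ψ v u =
      - ψ (fun x ↦ x) (VectorField.lieBracket ℝ v u) := by
  have hvs := hv.contDiff
  -- `ψ(v, ·)` is translation invariant.
  have hinv (i : Fin n) (w) (hw : IsCompactlySupportedVF w) :
      ψ v (VectorField.lieBracket ℝ (fun _ ↦ EuclideanSpace.single i (1 : ℝ)) w) = 0 := by
    have h := hcoc (fun _ ↦ EuclideanSpace.single i (1 : ℝ)) v w contDiff_const hvs hw
    -- `[v, w]` has to be compactly supported before `hvanish` applies to `ψ(∂ᵢ, [v, w])`.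
    have hc : IsCompactlySupportedVF (VectorField.lieBracket ℝ v w) := hw.lieBracket hvs
    rw [hvanish _ _ (isPolyVFDegLE_lieBracket_const i hv) hw,
      hvanish _ _ (isPolyVFDegLE_const k _) hc] at h
    linarith
  have hsum (s : Finset (Fin n)) : ψ v (∑ i ∈ s, VectorField.lieBracket ℝ
      (fun _ ↦ EuclideanSpace.single i (1 : ℝ)) (fun x ↦ x i • u x)) = 0 := by
    induction s using Finset.induction_on with
    | empty => simpa using hsmul₂ 0 v 0 hvs .zero
    | insert a s ha ih =>
      rw [Finset.sum_insert ha, hadd₂ _ _ _ hvs ((hu.coord_smul a).lieBracket contDiff_const)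
        (.sum fun i ↦ (hu.coord_smul i).lieBracket contDiff_const), ih, hinv _ _ (hu.coord_smul a),
        add_zero]
  have hE : ψ v (VectorField.lieBracket ℝ (fun x ↦ x) u) = -((n : ℝ) + 1) * ψ v u := by
    rw [sum_lieBracket_const hu.1, hadd₂ _ _ _ hvs
      (.sum fun i ↦ (hu.coord_smul i).lieBracket contDiff_const) (hu.smul _), hsum, hsmul₂ _ _ _ hvs hu,
      zero_add]
  have h := hcoc (fun x ↦ x) v u contDiff_id hvs hu
  rw [lieBracket_euler hv, hsmul₁ _ _ _ hvs hu, hE] at h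
  linarith
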